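/- For all integers n, m with 0 < m < n and every continuous function f on [−1,1], the VP interpolation error satisfies E_{n+m−1}(f)_∞ ≤ ‖f − V_n^m f‖_∞ ≤ (1 + (1+4π)·c_∞)·E_{n−m}(f)_∞, where V_n^m f(x) = Σ_{k=1}^{n} f(x_k^n) Φ_{n,k}^m(x), E_N(f)_∞ = inf{‖f−P‖_∞ : P a polynomial of degree ≤ N}, ‖·‖_∞ is the sup norm on [−1,1], and c_∞ = max_{|x|≤1} ∫_{−1}^{1} |v_n^m(x,y)| w(y) dy. -/

import Mathlib

open Real MeasureTheory Finset

/-- Chebyshev nodes of the first kind: `x_k^n = cos((2k-1)π/(2n))`. -/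
noncomputable def chebNode (n k : ℕ) : ℝ :=
  Real.cos ((2 * (k : ℝ) - 1) * Real.pi / (2 * (n : ℝ)))

/-- Orthonormal Chebyshev polynomials of the first kind. -/
noncomputable def chebP (r : ℕ) (x : ℝ) : ℝ :=
  if r = 0 then Real.sqrt (1 / Real.pi)
  else Real.sqrt (2 / Real.pi) * Real.cos ((r : ℝ) * Real.arccos x)

/-- Darboux kernel `K_r(x,y) = Σ_{s=0}^r p_s(x) p_s(y)`. -/
noncomputable def darboux (r : ℕ) (x y : ℝ) : ℝ :=
  ∑ s ∈ Finset.range (r + 1), chebP s x * chebP s y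

/-- de la Vallée Poussin kernel `v_n^m(x,y) = (1/(2m)) Σ_{r=n-m}^{n+m-1} K_r(x,y)`. -/
noncomputable def vpK (n m : ℕ) (x y : ℝ) : ℝ :=
  (1 / (2 * (m : ℝ))) * ∑ r ∈ Finset.Icc (n - m) (n + m - 1), darboux r x y

/-- The Chebyshev weight `w(x) = 1/√(1-x²)`. -/
noncomputable def chebW (x : ℝ) : ℝ := 1 / Real.sqrt (1 - x ^ 2)

/-- Scaling functions `Φ_{n,k}^m(x) = (π/n) v_n^m(x_k^n, x)`. -/
noncomputable def scal (n m k : ℕ) (x : ℝ) : ℝ :=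
  (Real.pi / (n : ℝ)) * vpK n m (chebNode n k) x

/-- The nodes `y_k^n`, `k = 1,…,2n`: the Chebyshev nodes of order `3n` not of order `n`. -/
noncomputable def yNode (n k : ℕ) : ℝ := chebNode (3 * n) (3 * k / 2)

/-- Wavelet functions `ψ_{n,k}^m`. -/
noncomputable def wav (n m k : ℕ) (x : ℝ) : ℝ :=
  (Real.pi / (3 * (n : ℝ))) * vpK (3 * n) m (yNode n k) x -
    ∑ h ∈ Finset.Icc 1 n,
      scal n m h (yNode n k) * ((Real.pi / (3 * (n : ℝ))) * vpK (3 * n) m (chebNode n h) x)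

/-- Filter coefficients `μ_{n,r}^m`. -/
noncomputable def muC (n m r : ℕ) : ℝ :=
  if r ≤ n - m then 1
  else if r < n + m then ((m : ℝ) + (n : ℝ) - (r : ℝ)) / (2 * (m : ℝ))
  else 0

/-- Squared norms `ν_{n,r}^m` of the orthogonal scaling basis. -/
noncomputable def nuC (n m r : ℕ) : ℝ :=
  if r ≤ n - m then 1 else ((m : ℝ) ^ 2 + ((n : ℝ) - (r : ℝ)) ^ 2) / (2 * (m : ℝ) ^ 2)

/-- Orthogonal scaling basis `Φ_{n,r}^⊥`. -/
noncomputable def scalPerp (n m r : ℕ) (x : ℝ) : ℝ :=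
  if r ≤ n - m then chebP r x
  else muC n m r * chebP r x - muC n m (2 * n - r) * chebP (2 * n - r) x

/-- The sup norm on `[-1,1]`. -/
noncomputable def supNorm (f : ℝ → ℝ) : ℝ := ⨆ x : Set.Icc (-1 : ℝ) 1, |f x|

/-- The Lebesgue constant `c_∞ = max_{|x|≤1} ∫_{-1}^1 |v_n^m(x,y)| w(y) dy`. -/
noncomputable def cInf (n m : ℕ) : ℝ :=
  ⨆ x : Set.Icc (-1 : ℝ) 1, ∫ y in (-1 : ℝ)..1, |vpK n m x y| * chebW y


/-- Error of best uniform approximation by polynomials of degree at most `N`. -/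
noncomputable def bestApprox (N : ℕ) (f : ℝ → ℝ) : ℝ :=
  sInf {a : ℝ | ∃ P : Polynomial ℝ,
    P.degree ≤ (N : WithBot ℕ) ∧ a = supNorm (fun x => f x - P.eval x)}

/-!
The interpolant `V_n^m f` is the mean `∫ f(t) v_n^m(t, ·) w(t) dt` discretised by the `n`-point
Gauss–Chebyshev quadrature. The quadrature is exact below degree `2n`, so `V_n^m` inherits from the
Darboux kernels the reproduction of polynomials of degree at most `n - m`, and the upper bound
reduces to `∑ₖ |Φ_{n,k}^m(x)| ≤ (1 + 4π) c_∞`.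

That sum is the quadrature of `|v_n^m(·, x)|`, the absolute value of a polynomial `P` of degree
less than `2n`. If `S_L = ∑_{r<L} K_r` are the Fejér sums, then `(S_{4n} - S_{2n}) / 2n` reproduces
`P`. Both sums are nonnegative and have bounded quadratures, so the quadrature of `|P|` is at most
`5 ∫ |P| w`, and `5 ≤ 1 + 4π`.
-/

open Polynomial Polynomial.Chebyshev

section ChebyshevPolynomials

lemma chebP_eq_mul_cos (r : ℕ) (x : ℝ) : chebP r x = chebP r 1 * cos (r * arccos x) := by
  unfold chebP
  split_ifs with h <;> simp [h]

lemma chebP_one_nonneg (r : ℕ) : 0 ≤ chebP r 1 := by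
  unfold chebP
  split_ifs
  · positivity
  · simpa using by positivity

lemma chebP_one_mul_self (r : ℕ) :
    chebP r 1 * chebP r 1 = if r = 0 then 1 / π else 2 / π := by
  unfold chebP
  split_ifs
  · exact mul_self_sqrt (by positivity)
  · simpa using mul_self_sqrt (by positivity : 0 ≤ 2 / π)

lemma chebP_one_ne_zero (r : ℕ) : chebP r 1 ≠ 0 := by
  have := pi_ne_zero
  refine mul_self_ne_zero.1 ?_
  rw [chebP_one_mul_self]
  split_ifs <;> positivity

lemma chebP_zero_mul_chebP_zero (x y : ℝ) : chebP 0 x * chebP 0 y = 1 / π := by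
  rw [chebP_eq_mul_cos 0 x, chebP_eq_mul_cos 0 y]
  simpa using chebP_one_mul_self 0

lemma abs_chebP_le (r : ℕ) (x : ℝ) : |chebP r x| ≤ chebP r 1 := by
  rw [chebP_eq_mul_cos, abs_mul, abs_of_nonneg (chebP_one_nonneg r)]
  exact mul_le_of_le_one_right (chebP_one_nonneg r) (abs_cos_le_one _)

lemma abs_chebP_mul_chebP_le (r : ℕ) (x y : ℝ) :
    |chebP r x * chebP r y| ≤ chebP r 1 * chebP r 1 := by
  rw [abs_mul]
  exact mul_le_mul (abs_chebP_le r x) (abs_chebP_le r y) (abs_nonneg _) (chebP_one_nonneg r)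

@[fun_prop]
lemma continuous_chebP (r : ℕ) : Continuous (chebP r) := by
  rw [funext (chebP_eq_mul_cos r)]
  have := continuous_arccos
  fun_prop

/-- The orthonormal Chebyshev polynomials as elements of `ℝ[X]`, so that degrees and spans make
sense. They agree with `chebP` on `[-1, 1]` only, since `chebP r` is constant on each side of that
interval. -/
noncomputable def chebPoly : Polynomial.Sequence ℝ where
  elems' r := chebP r 1 • T ℝ r
  degree_eq' r := by
    rw [smul_eq_C_mul, degree_C_mul (chebP_one_ne_zero r), degree_T, Int.natAbs_natCast]

lemma chebPoly_eq (r : ℕ) : chebPoly r = chebP r 1 • T ℝ r := rfl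

lemma eval_chebPoly (r : ℕ) {x : ℝ} (hx : x ∈ Set.Icc (-1 : ℝ) 1) :
    (chebPoly r).eval x = chebP r x := by
  rw [chebP_eq_mul_cos, chebPoly_eq, eval_smul, smul_eq_mul]
  conv_lhs => rw [← cos_arccos hx.1 hx.2]
  simp [T_real_cos]

lemma degreeLE_eq_span_chebPoly (N : ℕ) :
    degreeLE ℝ N = Submodule.span ℝ (chebPoly '' Set.Iic N) := by
  refine (chebPoly.span_degreeLE fun r _ => ?_).symm
  simp [chebPoly.ne_zero r]

end ChebyshevPolynomials

section ChebyshevMeasure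

lemma integral_measureT_congr {f g : ℝ → ℝ} (h : ∀ x ∈ Set.Icc (-1 : ℝ) 1, f x = g x) :
    ∫ x, f x ∂measureT = ∫ x, g x ∂measureT := by
  simp_rw [integral_measureT_eq_integral_cos]
  exact intervalIntegral.integral_congr fun θ _ => h _ (cos_mem_Icc θ)

lemma integrable_measureT_of_continuous {f : ℝ → ℝ} (hf : Continuous f) :
    Integrable f measureT :=
  integrable_measureT hf.continuousOn

lemma intervalIntegral_mul_chebW (f : ℝ → ℝ) :
    ∫ y in (-1 : ℝ)..1, f y * chebW y = ∫ y, f y ∂measureT := by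
  simp [integral_measureT, chebW]

lemma integral_T_mul_self (i : ℕ) :
    ∫ x, (T ℝ i).eval x * (T ℝ i).eval x ∂measureT = if i = 0 then π else π / 2 := by
  split_ifs with hi
  · subst hi
    exact integral_eval_T_real_mul_self_measureT_zero
  · exact integral_T_real_mul_self_measureT_of_ne_zero hi

lemma integral_chebPoly_mul_chebPoly (i j : ℕ) :
    ∫ x, (chebPoly i).eval x * (chebPoly j).eval x ∂measureT = if i = j then 1 else 0 := by
  have factor (x : ℝ) : (chebPoly i).eval x * (chebPoly j).eval x =
      chebP i 1 * chebP j 1 * ((T ℝ i).eval x * (T ℝ j).eval x) := by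
    simp only [chebPoly_eq, eval_smul, smul_eq_mul]
    ring
  simp_rw [factor, integral_const_mul]
  split_ifs with hij
  · subst hij
    rw [chebP_one_mul_self, integral_T_mul_self]
    split_ifs <;> field_simp
  · rw [integral_eval_T_real_mul_eval_T_real_measureT_of_ne hij, mul_zero]

end ChebyshevMeasure

section DarbouxKernel

lemma darboux_comm (r : ℕ) (x y : ℝ) : darboux r x y = darboux r y x :=
  sum_congr rfl fun _ _ => mul_comm _ _

lemma darboux_zero (x y : ℝ) : darboux 0 x y = 1 / π := by
  simp [darboux, chebP_zero_mul_chebP_zero]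

lemma darboux_succ (r : ℕ) (x y : ℝ) :
    darboux (r + 1) x y = darboux r x y + chebP (r + 1) x * chebP (r + 1) y :=
  sum_range_succ _ _

@[fun_prop]
lemma continuous_darboux_left (r : ℕ) (y : ℝ) : Continuous fun x => darboux r x y := by
  unfold darboux
  fun_prop

lemma abs_darboux_le (r : ℕ) (x y : ℝ) : |darboux r x y| ≤ darboux r 1 1 :=
  (abs_sum_le_sum_abs _ _).trans (sum_le_sum fun s _ => abs_chebP_mul_chebP_le s x y)

/-- The section `K_r(·, y)` of the Darboux kernel as a polynomial, to which the exactness of the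
quadrature applies. -/
noncomputable def darbouxPoly (r : ℕ) (y : ℝ) : ℝ[X] :=
  ∑ s ∈ range (r + 1), chebP s y • chebPoly s

lemma eval_darbouxPoly (r : ℕ) (y : ℝ) {x : ℝ} (hx : x ∈ Set.Icc (-1 : ℝ) 1) :
    (darbouxPoly r y).eval x = darboux r x y := by
  simp only [darbouxPoly, darboux, eval_finsetSum, eval_smul, eval_chebPoly _ hx, smul_eq_mul]
  exact sum_congr rfl fun _ _ => mul_comm _ _

lemma degree_darbouxPoly_le (r : ℕ) (y : ℝ) : (darbouxPoly r y).degree ≤ r := by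
  refine mem_degreeLE.1 (Submodule.sum_mem _ fun s hs => Submodule.smul_mem _ _ ?_)
  rw [mem_degreeLE, chebPoly.degree_eq]
  exact_mod_cast Nat.lt_succ_iff.1 (mem_range.1 hs)

lemma integral_chebPoly_mul_darboux {i r : ℕ} (hir : i ≤ r) {x : ℝ}
    (hx : x ∈ Set.Icc (-1 : ℝ) 1) :
    ∫ t, (chebPoly i).eval t * darboux r t x ∂measureT = (chebPoly i).eval x := by
  calc ∫ t, (chebPoly i).eval t * darboux r t x ∂measureT
      = ∫ t, ∑ s ∈ range (r + 1),
          chebP s x * ((chebPoly i).eval t * (chebPoly s).eval t) ∂measureT := by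
        refine integral_measureT_congr fun t ht => ?_
        rw [← eval_darbouxPoly r x ht, darbouxPoly, eval_finsetSum, mul_sum]
        refine sum_congr rfl fun s _ => ?_
        rw [eval_smul, smul_eq_mul]
        ring
    _ = ∑ s ∈ range (r + 1), chebP s x * if i = s then 1 else 0 := by
        rw [integral_finsetSum _ fun s _ => integrable_measureT_of_continuous (by fun_prop)]
        simp_rw [integral_const_mul, integral_chebPoly_mul_chebPoly]
    _ = (chebPoly i).eval x := by
        simp [eval_chebPoly i hx, Nat.lt_succ_iff.2 hir]

theorem integral_eval_mul_darboux {r : ℕ} {P : ℝ[X]} (hP : P.degree ≤ r) {x : ℝ}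
    (hx : x ∈ Set.Icc (-1 : ℝ) 1) :
    ∫ t, P.eval t * darboux r t x ∂measureT = P.eval x := by
  rw [← mem_degreeLE, degreeLE_eq_span_chebPoly] at hP
  induction hP using Submodule.span_induction with
  | mem _ h =>
    obtain ⟨i, hi, rfl⟩ := h
    exact integral_chebPoly_mul_darboux hi hx
  | zero => simp
  | add P Q _ _ ihP ihQ =>
    simp_rw [eval_add, add_mul]
    rw [integral_add (integrable_measureT_of_continuous (by fun_prop))
      (integrable_measureT_of_continuous (by fun_prop)), ihP, ihQ]
  | smul c P _ ihP =>
    simp_rw [eval_smul, smul_eq_mul, mul_assoc]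
    rw [integral_const_mul, ihP]

end DarbouxKernel

section GaussChebyshevQuadrature

/-- The `n`-point Gauss–Chebyshev quadrature `(π/n) ∑ₖ g(xₖⁿ)`, for arbitrary functions `g`
(Mathlib's `sumZeroes` takes polynomials). -/
noncomputable def chebQuad (n : ℕ) (g : ℝ → ℝ) : ℝ :=
  π / n * ∑ k ∈ Icc 1 n, g (chebNode n k)

lemma chebNode_mem_Icc (n k : ℕ) : chebNode n k ∈ Set.Icc (-1 : ℝ) 1 :=
  cos_mem_Icc _

lemma chebQuad_mono {n : ℕ} {g h : ℝ → ℝ} (hgh : ∀ t ∈ Set.Icc (-1 : ℝ) 1, g t ≤ h t) :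
    chebQuad n g ≤ chebQuad n h :=
  mul_le_mul_of_nonneg_left (sum_le_sum fun k _ => hgh _ (chebNode_mem_Icc n k)) (by positivity)

lemma chebQuad_congr {n : ℕ} {g h : ℝ → ℝ} (hgh : ∀ t ∈ Set.Icc (-1 : ℝ) 1, g t = h t) :
    chebQuad n g = chebQuad n h :=
  (chebQuad_mono fun t ht => (hgh t ht).le).antisymm (chebQuad_mono fun t ht => (hgh t ht).ge)

lemma chebQuad_const {n : ℕ} (hn : n ≠ 0) (c : ℝ) : chebQuad n (fun _ => c) = π * c := by
  rw [chebQuad, sum_const, Nat.card_Icc, Nat.add_sub_cancel, nsmul_eq_mul]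
  field_simp

lemma chebQuad_const_mul (n : ℕ) (c : ℝ) (g : ℝ → ℝ) :
    chebQuad n (fun t => c * g t) = c * chebQuad n g := by
  rw [chebQuad, ← mul_sum, mul_left_comm, chebQuad]

lemma chebQuad_add (n : ℕ) (g h : ℝ → ℝ) :
    chebQuad n (fun t => g t + h t) = chebQuad n g + chebQuad n h := by
  rw [chebQuad, sum_add_distrib, mul_add, chebQuad, chebQuad]

lemma chebQuad_sum {ι : Type*} (n : ℕ) (s : Finset ι) (g : ι → ℝ → ℝ) :
    chebQuad n (fun t => ∑ i ∈ s, g i t) = ∑ i ∈ s, chebQuad n (g i) := by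
  simp only [chebQuad]
  rw [sum_comm, mul_sum]

lemma chebQuad_integral (n : ℕ) {μ : Measure ℝ} {F : ℝ → ℝ → ℝ}
    (hF : ∀ t, Integrable (F t) μ) :
    chebQuad n (fun t => ∫ y, F t y ∂μ) = ∫ y, chebQuad n (fun t => F t y) ∂μ := by
  simp only [chebQuad]
  rw [integral_const_mul, integral_finsetSum _ fun k _ => hF _]

lemma chebQuad_eval (n : ℕ) (P : ℝ[X]) : chebQuad n (fun t => P.eval t) = sumZeroes n P := by
  rw [chebQuad, sumZeroes, ← Ico_add_one_right_eq_Icc, sum_Ico_eq_sum_range, Nat.add_sub_cancel]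
  congr 1
  refine sum_congr rfl fun i _ => ?_
  rw [chebNode]
  congr 2
  push_cast
  ring

lemma chebQuad_eval_eq_integral {n : ℕ} (hn : n ≠ 0) {P : ℝ[X]} (hP : P.degree < 2 * n) :
    chebQuad n (fun t => P.eval t) = ∫ t, P.eval t ∂measureT := by
  rw [chebQuad_eval, integral_eq_sumZeroes hn hP]

lemma chebQuad_chebP_of_not_dvd {n r : ℕ} (h : ¬ 2 * n ∣ r) : chebQuad n (chebP r) = 0 := by
  have : ¬ (2 * n : ℤ) ∣ r := by exact_mod_cast h
  rw [← chebQuad_congr fun t ht => eval_chebPoly r ht, chebQuad_eval, chebPoly_eq, sumZeroes_smul,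
    sumZeroes_T_of_not_dvd this, mul_zero]

theorem chebQuad_eval_mul_darboux {n r d : ℕ} {P : ℝ[X]} (hP : P.degree ≤ d) (hdr : d ≤ r)
    (hn : d + r < 2 * n) {x : ℝ} (hx : x ∈ Set.Icc (-1 : ℝ) 1) :
    chebQuad n (fun t => P.eval t * darboux r t x) = P.eval x := by
  have eval_product : ∀ t ∈ Set.Icc (-1 : ℝ) 1,
      (P * darbouxPoly r x).eval t = P.eval t * darboux r t x := fun t ht => by
    rw [eval_mul, eval_darbouxPoly r x ht]
  have degree_lt : (P * darbouxPoly r x).degree < 2 * n :=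
    (degree_mul_le _ _).trans_lt <|
      (add_le_add hP (degree_darbouxPoly_le r x)).trans_lt (by exact_mod_cast hn)
  rw [← chebQuad_congr eval_product, chebQuad_eval_eq_integral (by lia) degree_lt,
    integral_measureT_congr eval_product]
  exact integral_eval_mul_darboux (hP.trans (by exact_mod_cast hdr)) hx

end GaussChebyshevQuadrature

section FejerKernel

/-- The trigonometric Dirichlet kernel, normalised to constant term `1`; the positivity of the Fejér
sums is proved through it. -/
noncomputable def dirichletKernel (r : ℕ) (t : ℝ) : ℝ :=
  1 + 2 * ∑ s ∈ range r, cos ((s + 1 : ℕ) * t)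

lemma sum_cos_succ_mul (L : ℕ) (t : ℝ) :
    ∑ s ∈ range L, cos ((s + 1 : ℕ) * t) =
      cos (L * t) * ∑ a ∈ range L, cos (a * t) + sin (L * t) * ∑ a ∈ range L, sin (a * t) := by
  rw [← sum_range_reflect, mul_sum, mul_sum, ← sum_add_distrib]
  refine sum_congr rfl fun a ha => ?_
  have haL : a < L := mem_range.1 ha
  rw [← cos_sub, ← sub_mul, show L - 1 - a + 1 = L - a by lia, Nat.cast_sub haL.le]

/-- Both sides are `|∑_{a<L} exp (i a t)|²`. -/
lemma sum_dirichletKernel (L : ℕ) (t : ℝ) :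
    ∑ r ∈ range L, dirichletKernel r t =
      (∑ a ∈ range L, cos (a * t)) ^ 2 + (∑ a ∈ range L, sin (a * t)) ^ 2 := by
  induction L with
  | zero => simp
  | succ L ih =>
    rw [sum_range_succ, ih, sum_range_succ, sum_range_succ, dirichletKernel, sum_cos_succ_mul]
    linear_combination -sin_sq_add_cos_sq (L * t)

lemma chebP_succ_mul_chebP_succ (s : ℕ) (x y : ℝ) :
    chebP (s + 1) x * chebP (s + 1) y =
      1 / π * (cos ((s + 1 : ℕ) * (arccos x - arccos y)) +
        cos ((s + 1 : ℕ) * (arccos x + arccos y))) := by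
  have scale : chebP (s + 1) 1 * chebP (s + 1) 1 = 2 / π := by simp [chebP_one_mul_self]
  rw [chebP_eq_mul_cos _ x, chebP_eq_mul_cos _ y, mul_sub, mul_add _ (arccos x),
    ← two_mul_cos_mul_cos]
  linear_combination cos ((s + 1 : ℕ) * arccos x) * cos ((s + 1 : ℕ) * arccos y) * scale

lemma darboux_eq_dirichletKernel (r : ℕ) (x y : ℝ) :
    darboux r x y = 1 / (2 * π) *
      (dirichletKernel r (arccos x - arccos y) + dirichletKernel r (arccos x + arccos y)) := by
  rw [darboux, sum_range_succ', chebP_zero_mul_chebP_zero]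
  simp_rw [chebP_succ_mul_chebP_succ, ← mul_sum, sum_add_distrib, dirichletKernel]
  field

/-- The Fejér kernel of the Chebyshev system, without the normalising factor `1 / L`: its
nonnegativity turns reproduction formulas for polynomials into bounds for their absolute values. -/
noncomputable def fejerSum (L : ℕ) (x y : ℝ) : ℝ :=
  ∑ r ∈ range L, darboux r x y

@[fun_prop]
lemma continuous_fejerSum_left (L : ℕ) (y : ℝ) : Continuous fun x => fejerSum L x y := by
  unfold fejerSum
  fun_prop

lemma fejerSum_comm (L : ℕ) (x y : ℝ) : fejerSum L x y = fejerSum L y x :=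
  sum_congr rfl fun r _ => darboux_comm r x y

theorem fejerSum_nonneg (L : ℕ) (x y : ℝ) : 0 ≤ fejerSum L x y := by
  simp_rw [fejerSum, darboux_eq_dirichletKernel]
  rw [← mul_sum, sum_add_distrib, sum_dirichletKernel, sum_dirichletKernel]
  positivity

lemma sub_mul_eval_eq_integral {a b : ℕ} (hab : a ≤ b) {P : ℝ[X]} (hP : P.degree ≤ a) {x : ℝ}
    (hx : x ∈ Set.Icc (-1 : ℝ) 1) :
    ((b : ℝ) - a) * P.eval x =
      ∫ y, P.eval y * (fejerSum b y x - fejerSum a y x) ∂measureT := by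
  simp_rw [fejerSum, ← sum_Ico_eq_sub _ hab, mul_sum]
  rw [integral_finsetSum _ fun r _ => integrable_measureT_of_continuous (by fun_prop),
    sum_congr rfl fun r hr => integral_eval_mul_darboux
      (hP.trans (by exact_mod_cast (mem_Ico.1 hr).1)) hx]
  simp [Nat.cast_sub hab]

lemma sub_mul_abs_eval_le_integral {a b : ℕ} (hab : a ≤ b) {P : ℝ[X]} (hP : P.degree ≤ a) {x : ℝ}
    (hx : x ∈ Set.Icc (-1 : ℝ) 1) :
    ((b : ℝ) - a) * |P.eval x| ≤
      ∫ y, |P.eval y| * (fejerSum b y x + fejerSum a y x) ∂measureT := by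
  have hba : (0 : ℝ) ≤ b - a := sub_nonneg.2 (by exact_mod_cast hab)
  calc ((b : ℝ) - a) * |P.eval x|
      = |∫ y, P.eval y * (fejerSum b y x - fejerSum a y x) ∂measureT| := by
        rw [← sub_mul_eval_eq_integral hab hP hx, abs_mul, abs_of_nonneg hba]
    _ ≤ ∫ y, |P.eval y * (fejerSum b y x - fejerSum a y x)| ∂measureT :=
        abs_integral_le_integral_abs
    _ ≤ ∫ y, |P.eval y| * (fejerSum b y x + fejerSum a y x) ∂measureT := by
        refine integral_mono (integrable_measureT_of_continuous (by fun_prop))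
          (integrable_measureT_of_continuous (by fun_prop)) fun y => ?_
        dsimp only
        rw [abs_mul]
        gcongr
        rw [abs_le]
        constructor <;> linarith [fejerSum_nonneg a y x, fejerSum_nonneg b y x]

end FejerKernel

section MarcinkiewiczInequality

lemma chebQuad_chebP_succ_mul_le_two {n : ℕ} (hn : n ≠ 0) (r : ℕ) (y : ℝ) :
    chebQuad n (fun t => chebP (r + 1) t * chebP (r + 1) y) ≤ 2 := by
  calc chebQuad n (fun t => chebP (r + 1) t * chebP (r + 1) y)
      ≤ chebQuad n (fun _ => chebP (r + 1) 1 * chebP (r + 1) 1) :=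
        chebQuad_mono fun t _ => (le_abs_self _).trans (abs_chebP_mul_chebP_le _ t y)
    _ = 2 := by
        rw [chebQuad_const hn, chebP_one_mul_self, if_neg r.succ_ne_zero]
        field_simp

/-- Besides the constant term, only the terms of `K_r` whose index is a multiple of `2n` are seen
by the nodes. -/
lemma chebQuad_darboux_le {n : ℕ} (hn : n ≠ 0) (r : ℕ) (y : ℝ) :
    chebQuad n (fun t => darboux r t y) ≤ 1 + 2 * (r / (2 * n) : ℕ) := by
  induction r with
  | zero =>
    simp_rw [darboux_zero, chebQuad_const hn]
    simp
  | succ r ih =>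
    simp_rw [darboux_succ, chebQuad_add, Nat.succ_div]
    split_ifs with h
    · push_cast
      linarith [chebQuad_chebP_succ_mul_le_two hn r y]
    · simp_rw [mul_comm _ (chebP (r + 1) y), chebQuad_const_mul, chebQuad_chebP_of_not_dvd h]
      simpa using ih

lemma chebQuad_fejerSum_le {n : ℕ} (hn : n ≠ 0) (q : ℕ) (y : ℝ) :
    chebQuad n (fejerSum (2 * n * q) y) ≤ 2 * n * q ^ 2 := by
  have block (q : ℕ) : ∑ i ∈ range (2 * n), chebQuad n (fun t => darboux (2 * n * q + i) t y) ≤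
      2 * n * (1 + 2 * q) := by
    calc ∑ i ∈ range (2 * n), chebQuad n (fun t => darboux (2 * n * q + i) t y)
        ≤ ∑ _i ∈ range (2 * n), (1 + 2 * q : ℝ) := by
          refine sum_le_sum fun i hi => (chebQuad_darboux_le hn _ y).trans_eq ?_
          rw [Nat.mul_add_div (by lia), Nat.div_eq_of_lt (mem_range.1 hi), add_zero]
      _ = 2 * n * (1 + 2 * q) := by
          rw [sum_const, card_range, nsmul_eq_mul]
          push_cast
          rfl
  simp only [funext (fejerSum_comm _ y), fejerSum, chebQuad_sum]
  induction q with
  | zero => simp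
  | succ q ih =>
    rw [mul_add_one, sum_range_add]
    push_cast
    linarith [block q]

/-- With `S_L = fejerSum L`, the kernel `(S_{4n} - S_{2n}) / 2n` reproduces `P`, and the quadratures
of `S_{4n}` and `S_{2n}` are at most `8n` and `2n`; hence the constant `5 = (8n + 2n) / 2n`. -/
theorem chebQuad_abs_eval_le {n : ℕ} (hn : n ≠ 0) {P : ℝ[X]} (hP : P.degree ≤ 2 * n) :
    chebQuad n (fun t => |P.eval t|) ≤ 5 * ∫ y, |P.eval y| ∂measureT := by
  have hn_pos : (0 : ℝ) < 2 * n := by positivity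
  refine le_of_mul_le_mul_left ?_ hn_pos
  calc 2 * n * chebQuad n (fun t => |P.eval t|)
      ≤ chebQuad n fun t => ∫ y, |P.eval y| *
          (fejerSum (2 * n * 2) y t + fejerSum (2 * n * 1) y t) ∂measureT := by
        rw [← chebQuad_const_mul]
        refine chebQuad_mono fun t ht => ?_
        convert sub_mul_abs_eval_le_integral (a := 2 * n * 1) (b := 2 * n * 2) (by lia)
          (by simpa using hP) ht using 2
        push_cast
        ring
    _ = ∫ y, |P.eval y| * (chebQuad n (fejerSum (2 * n * 2) y) +
          chebQuad n (fejerSum (2 * n * 1) y)) ∂measureT := by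
        rw [chebQuad_integral n fun t => integrable_measureT_of_continuous (by fun_prop)]
        simp_rw [chebQuad_const_mul, chebQuad_add]
    _ ≤ ∫ y, |P.eval y| * (10 * n) ∂measureT := by
        refine integral_mono (integrable_measureT_of_continuous (by unfold chebQuad; fun_prop))
          (integrable_measureT_of_continuous (by fun_prop)) fun y => ?_
        have quad_le_double := chebQuad_fejerSum_le hn 2 y
        have quad_le_single := chebQuad_fejerSum_le hn 1 y
        push_cast at quad_le_double quad_le_single
        dsimp only
        gcongr
        linarith
    _ = 2 * n * (5 * ∫ y, |P.eval y| ∂measureT) := by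
        rw [integral_mul_const]
        ring

end MarcinkiewiczInequality

section ValleePoussinKernel

lemma vpK_comm (n m : ℕ) (x y : ℝ) : vpK n m x y = vpK n m y x := by
  simp_rw [vpK, darboux_comm _ x y]

lemma abs_vpK_le (n m : ℕ) (x y : ℝ) : |vpK n m x y| ≤ vpK n m 1 1 := by
  have coeff_nonneg : (0 : ℝ) ≤ 1 / (2 * m) := by positivity
  rw [vpK, abs_mul, abs_of_nonneg coeff_nonneg]
  exact mul_le_mul_of_nonneg_left
    ((abs_sum_le_sum_abs _ _).trans (sum_le_sum fun r _ => abs_darboux_le r x y)) coeff_nonneg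

@[fun_prop]
lemma continuous_vpK_left (n m : ℕ) (y : ℝ) : Continuous fun x => vpK n m x y := by
  unfold vpK
  fun_prop

/-- The section `v_n^m(·, y)` of the de la Vallée Poussin kernel as a polynomial, to which the
Marcinkiewicz inequality applies. -/
noncomputable def vpPoly (n m : ℕ) (y : ℝ) : ℝ[X] :=
  (1 / (2 * m : ℝ)) • ∑ r ∈ Icc (n - m) (n + m - 1), darbouxPoly r y

lemma eval_vpPoly (n m : ℕ) (y : ℝ) {x : ℝ} (hx : x ∈ Set.Icc (-1 : ℝ) 1) :
    (vpPoly n m y).eval x = vpK n m x y := by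
  simp only [vpPoly, vpK, eval_smul, eval_finsetSum, eval_darbouxPoly _ _ hx, smul_eq_mul]

lemma degree_vpPoly_le (n m : ℕ) (y : ℝ) : (vpPoly n m y).degree ≤ (n + m - 1 : ℕ) := by
  refine mem_degreeLE.1 (Submodule.smul_mem _ _ (Submodule.sum_mem _ fun r hr => ?_))
  exact mem_degreeLE.2
    ((degree_darbouxPoly_le r y).trans (by exact_mod_cast (mem_Icc.1 hr).2))

theorem chebQuad_eval_mul_vpK {n m : ℕ} (hm : 0 < m) (hmn : m ≤ n) {P : ℝ[X]}
    (hP : P.degree ≤ (n - m : ℕ)) {x : ℝ} (hx : x ∈ Set.Icc (-1 : ℝ) 1) :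
    chebQuad n (fun t => P.eval t * vpK n m t x) = P.eval x := by
  calc chebQuad n (fun t => P.eval t * vpK n m t x)
      = 1 / (2 * m) * ∑ r ∈ Icc (n - m) (n + m - 1),
          chebQuad n (fun t => P.eval t * darboux r t x) := by
        simp_rw [← chebQuad_sum, ← chebQuad_const_mul, vpK, ← mul_sum, mul_left_comm]
    _ = 1 / (2 * m) * ∑ _r ∈ Icc (n - m) (n + m - 1), P.eval x := by
        congr 1
        refine sum_congr rfl fun r hr => ?_
        have := mem_Icc.1 hr
        exact chebQuad_eval_mul_darboux hP (by lia) (by lia) hx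
    _ = P.eval x := by
        rw [sum_const, Nat.card_Icc, show n + m - 1 + 1 - (n - m) = 2 * m by lia, nsmul_eq_mul]
        push_cast
        field_simp

lemma cInf_eq_iSup_integral_measureT (n m : ℕ) :
    cInf n m = ⨆ x : Set.Icc (-1 : ℝ) 1, ∫ y, |vpK n m y x| ∂measureT := by
  simp_rw [cInf, intervalIntegral_mul_chebW, vpK_comm n m _ (_ : ℝ)]

lemma cInf_nonneg (n m : ℕ) : 0 ≤ cInf n m := by
  rw [cInf_eq_iSup_integral_measureT]
  exact iSup_nonneg fun x => integral_nonneg fun y => abs_nonneg _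

lemma integral_abs_vpK_le_cInf (n m : ℕ) {x : ℝ} (hx : x ∈ Set.Icc (-1 : ℝ) 1) :
    ∫ y, |vpK n m y x| ∂measureT ≤ cInf n m := by
  rw [cInf_eq_iSup_integral_measureT]
  refine le_ciSup (f := fun z : Set.Icc (-1 : ℝ) 1 => ∫ y, |vpK n m y z| ∂measureT)
    ⟨∫ _, vpK n m 1 1 ∂measureT, ?_⟩ ⟨x, hx⟩
  rintro _ ⟨z, rfl⟩
  exact integral_mono (integrable_measureT_of_continuous (by fun_prop))
    (integrable_measureT_of_continuous (by fun_prop)) fun y => abs_vpK_le n m y z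

end ValleePoussinKernel

section ValleePoussinInterpolant

lemma sum_mul_scal_eq_chebQuad (n m : ℕ) (g : ℝ → ℝ) (x : ℝ) :
    ∑ k ∈ Icc 1 n, g (chebNode n k) * scal n m k x = chebQuad n (fun t => g t * vpK n m t x) := by
  rw [chebQuad, mul_sum]
  exact sum_congr rfl fun k _ => mul_left_comm _ _ _

theorem sum_abs_scal_le {n m : ℕ} (hmn : m ≤ n) {x : ℝ} (hx : x ∈ Set.Icc (-1 : ℝ) 1) :
    ∑ k ∈ Icc 1 n, |scal n m k x| ≤ 5 * cInf n m := by
  obtain rfl | hn := eq_or_ne n 0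
  · simpa using cInf_nonneg 0 m
  have degree_le : (vpPoly n m x).degree ≤ 2 * n :=
    (degree_vpPoly_le n m x).trans (by exact_mod_cast (by lia : n + m - 1 ≤ 2 * n))
  have abs_eval : ∀ t ∈ Set.Icc (-1 : ℝ) 1, |(vpPoly n m x).eval t| = |vpK n m t x| :=
    fun t ht => by rw [eval_vpPoly n m x ht]
  calc ∑ k ∈ Icc 1 n, |scal n m k x|
      = chebQuad n (fun t => |vpK n m t x|) := by
        simp_rw [scal, abs_mul, ← mul_sum, chebQuad, abs_of_nonneg (by positivity : 0 ≤ π / n)]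
    _ ≤ 5 * ∫ y, |vpK n m y x| ∂measureT := by
        rw [← chebQuad_congr abs_eval, ← integral_measureT_congr abs_eval]
        exact chebQuad_abs_eval_le hn degree_le
    _ ≤ 5 * cInf n m := by
        gcongr
        exact integral_abs_vpK_le_cInf n m hx

/-- The de la Vallée Poussin interpolant `V_n^m f` as a polynomial, a competitor in the best
approximation of degree `n + m - 1`. -/
noncomputable def vpInterpolant (n m : ℕ) (f : ℝ → ℝ) : ℝ[X] :=
  ∑ k ∈ Icc 1 n, (f (chebNode n k) * (π / n)) • vpPoly n m (chebNode n k)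

lemma eval_vpInterpolant (n m : ℕ) (f : ℝ → ℝ) {x : ℝ} (hx : x ∈ Set.Icc (-1 : ℝ) 1) :
    (vpInterpolant n m f).eval x = ∑ k ∈ Icc 1 n, f (chebNode n k) * scal n m k x := by
  simp only [vpInterpolant, scal, eval_finsetSum, eval_smul, eval_vpPoly _ _ _ hx, smul_eq_mul,
    mul_assoc, vpK_comm n m x]

lemma degree_vpInterpolant_le (n m : ℕ) (f : ℝ → ℝ) :
    (vpInterpolant n m f).degree ≤ (n + m - 1 : ℕ) :=
  mem_degreeLE.1 <| Submodule.sum_mem _ fun _ _ =>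
    Submodule.smul_mem _ _ (mem_degreeLE.2 (degree_vpPoly_le n m _))

/-- Lebesgue's inequality: writing `f = p + (f - p)`, only `f - p` contributes to the error. -/
lemma abs_sub_sum_mul_le {α ι : Type*} {s : Finset ι} {node : ι → α} {φ : ι → ℝ} {f p : α → ℝ}
    {x : α} {E Λ : ℝ} (hp : ∑ k ∈ s, p (node k) * φ k = p x) (hx : |f x - p x| ≤ E)
    (hnode : ∀ k ∈ s, |f (node k) - p (node k)| ≤ E) (hφ : ∑ k ∈ s, |φ k| ≤ Λ) :
    |f x - ∑ k ∈ s, f (node k) * φ k| ≤ (1 + Λ) * E := by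
  have E_nonneg : 0 ≤ E := (abs_nonneg _).trans hx
  calc |f x - ∑ k ∈ s, f (node k) * φ k|
      = |(f x - p x) - ∑ k ∈ s, (f (node k) - p (node k)) * φ k| := by
        simp_rw [sub_mul, sum_sub_distrib, hp]
        ring_nf
    _ ≤ |f x - p x| + ∑ k ∈ s, |(f (node k) - p (node k)) * φ k| :=
        (abs_sub _ _).trans (by gcongr; exact abs_sum_le_sum_abs _ _)
    _ ≤ E + ∑ k ∈ s, E * |φ k| := by
        gcongr with k hk
        rw [abs_mul]
        gcongr
        exact hnode k hk
    _ = E + E * ∑ k ∈ s, |φ k| := by rw [mul_sum]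
    _ ≤ E + E * Λ := by gcongr
    _ = (1 + Λ) * E := by ring

end ValleePoussinInterpolant

section BestApproximation

lemma supNorm_nonneg (g : ℝ → ℝ) : 0 ≤ supNorm g :=
  iSup_nonneg fun _ => abs_nonneg _

lemma supNorm_congr {g h : ℝ → ℝ} (hgh : ∀ x ∈ Set.Icc (-1 : ℝ) 1, g x = h x) :
    supNorm g = supNorm h :=
  iSup_congr fun x => by rw [hgh x x.2]

lemma supNorm_le {g : ℝ → ℝ} {C : ℝ} (hg : ∀ x ∈ Set.Icc (-1 : ℝ) 1, |g x| ≤ C) :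
    supNorm g ≤ C :=
  have : Nonempty (Set.Icc (-1 : ℝ) 1) := ⟨⟨0, by norm_num⟩⟩
  ciSup_le fun x => hg x x.2

lemma abs_sub_eval_le_supNorm {f : ℝ → ℝ} (hf : Bornology.IsBounded (f '' Set.Icc (-1) 1))
    (P : ℝ[X]) {x : ℝ} (hx : x ∈ Set.Icc (-1 : ℝ) 1) :
    |f x - P.eval x| ≤ supNorm (fun t => f t - P.eval t) := by
  obtain ⟨A, hA⟩ := hf.exists_norm_le
  obtain ⟨B, hB⟩ := isCompact_Icc.exists_bound_of_continuousOn P.continuousOn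
  refine le_ciSup (f := fun t : Set.Icc (-1 : ℝ) 1 => |f t - P.eval (t : ℝ)|) ⟨A + B, ?_⟩ ⟨x, hx⟩
  rintro _ ⟨t, rfl⟩
  exact (abs_sub _ _).trans (add_le_add (hA _ ⟨t, t.2, rfl⟩) (hB t t.2))

lemma bestApprox_nonneg (N : ℕ) (f : ℝ → ℝ) : 0 ≤ bestApprox N f := by
  refine Real.sInf_nonneg ?_
  rintro _ ⟨P, _, rfl⟩
  exact supNorm_nonneg _

lemma bestApprox_le {N : ℕ} {P : ℝ[X]} (hP : P.degree ≤ N) (f : ℝ → ℝ) :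
    bestApprox N f ≤ supNorm (fun x => f x - P.eval x) := by
  refine csInf_le ⟨0, ?_⟩ ⟨P, hP, rfl⟩
  rintro _ ⟨Q, _, rfl⟩
  exact supNorm_nonneg _

lemma le_mul_bestApprox {N : ℕ} {f : ℝ → ℝ} {a C : ℝ} (hC : 0 < C)
    (h : ∀ P : ℝ[X], P.degree ≤ N → a ≤ C * supNorm (fun x => f x - P.eval x)) :
    a ≤ C * bestApprox N f := by
  rw [← div_le_iff₀' hC]
  refine le_csInf ⟨_, 0, by simp, rfl⟩ ?_
  rintro _ ⟨P, hP, rfl⟩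
  exact (div_le_iff₀' hC).2 (h P hP)

end BestApproximation

theorem vp_interpolation_error_general (n m : ℕ) (hm : 0 < m) (hmn : m ≤ n)
    (f : ℝ → ℝ) (hf : Bornology.IsBounded (f '' Set.Icc (-1 : ℝ) 1)) :
    bestApprox (n + m - 1) f ≤
        supNorm (fun x => f x - ∑ k ∈ Finset.Icc 1 n, f (chebNode n k) * scal n m k x) ∧
      supNorm (fun x => f x - ∑ k ∈ Finset.Icc 1 n, f (chebNode n k) * scal n m k x) ≤
        (1 + 5 * cInf n m) * bestApprox (n - m) f := by
  constructor
  · rw [← supNorm_congr fun x hx => congrArg (f x - ·) (eval_vpInterpolant n m f hx)]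
    exact bestApprox_le (degree_vpInterpolant_le n m f) f
  · have := cInf_nonneg n m
    refine le_mul_bestApprox (by positivity) fun P hP => supNorm_le fun x hx => ?_
    have reproduction : ∑ k ∈ Icc 1 n, P.eval (chebNode n k) * scal n m k x = P.eval x := by
      rw [sum_mul_scal_eq_chebQuad n m (P.eval ·), chebQuad_eval_mul_vpK hm hmn hP hx]
    exact abs_sub_sum_mul_le (p := (P.eval ·)) reproduction (abs_sub_eval_le_supNorm hf P hx)
      (fun k _ => abs_sub_eval_le_supNorm hf P (chebNode_mem_Icc n k)) (sum_abs_scal_le hmn hx)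

theorem vp_interpolation_error (n m : ℕ) (hm : 0 < m) (hmn : m < n)
    (f : ℝ → ℝ) (hf : ContinuousOn f (Set.Icc (-1 : ℝ) 1)) :
    bestApprox (n + m - 1) f ≤
        supNorm (fun x => f x - ∑ k ∈ Finset.Icc 1 n, f (chebNode n k) * scal n m k x) ∧
      supNorm (fun x => f x - ∑ k ∈ Finset.Icc 1 n, f (chebNode n k) * scal n m k x) ≤
        (1 + (1 + 4 * Real.pi) * cInf n m) * bestApprox (n - m) f := by
  obtain ⟨lower, upper⟩ := vp_interpolation_error_general n m hm hmn.le f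
    (isCompact_Icc.image_of_continuousOn hf).isBounded
  refine ⟨lower, upper.trans ?_⟩
  gcongr
  exacts [bestApprox_nonneg _ f, cInf_nonneg n m, by linarith [pi_gt_three]]
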